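/- Let ℓ be a prime, k an algebraic closure of the field with ℓ elements, n a natural number, and A_n the alternating group on n letters. Then every block b of kA_n satisfies mf(kA_n b) = 1; that is, kA_n b is Morita equivalent (as a k-algebra) to its first Frobenius twist. -/

import Mathlib

open CategoryTheory

/-- A central idempotent of a ring. -/
def IsCentralIdem {R : Type*} [Ring R] (b : R) : Prop :=
  (∀ x, b * x = x * b) ∧ b * b = b

/-- A block of a ring: a primitive idempotent of the center, i.e. a nonzero central
idempotent that is not a sum of two nonzero orthogonal central idempotents. -/
def IsBlock {R : Type*} [Ring R] (b : R) : Prop :=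
  IsCentralIdem b ∧ b ≠ 0 ∧
    ∀ c d : R, IsCentralIdem c → IsCentralIdem d → c * d = 0 → b = c + d →
      c = 0 ∨ d = 0

/-- The corner of an idempotent `b`, as a non-unital subring of `R`. -/
def cornerSubring {R : Type*} [Ring R] (b : R) : NonUnitalSubring R where
  carrier := {x | b * x = x ∧ x * b = x}
  add_mem' := by
    rintro x y ⟨hx1, hx2⟩ ⟨hy1, hy2⟩
    exact ⟨by rw [mul_add, hx1, hy1], by rw [add_mul, hx2, hy2]⟩
  zero_mem' := ⟨mul_zero b, zero_mul b⟩
  neg_mem' := by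
    rintro x ⟨h1, h2⟩
    exact ⟨by rw [mul_neg, h1], by rw [neg_mul, h2]⟩
  mul_mem' := by
    rintro x y ⟨hx1, hx2⟩ ⟨hy1, hy2⟩
    refine ⟨by rw [← mul_assoc, hx1], by rw [mul_assoc, hy2]⟩

/-- The corner algebra `R·b` of a central idempotent `b`, as a type.  For a block `b`
of a group algebra `kG` this is the block algebra `kG·b`. -/
def Corner {R : Type*} [Ring R] (b : R) : Type _ := cornerSubring b

instance {R : Type*} [Ring R] (b : R) : NonUnitalRing (Corner b) :=
  inferInstanceAs (NonUnitalRing (cornerSubring b))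

/-- For `b` a central idempotent, the corner `R·b` is a unital ring with identity `b`. -/
instance {R : Type*} [Ring R] (b : R) [hb : Fact (IsCentralIdem b)] : Ring (Corner b) where
  __ := (inferInstance : NonUnitalRing (Corner b))
  one := ⟨b, hb.out.2, hb.out.2⟩
  one_mul x := Subtype.ext x.2.1
  mul_one x := Subtype.ext x.2.2

/-- For `b` a central idempotent in a `k`-algebra `R`, the corner `R·b` is a
`k`-algebra with unit `b`. -/
instance {k R : Type*} [CommSemiring k] [Ring R] [Algebra k R] (b : R)
    [hb : Fact (IsCentralIdem b)] : Algebra k (Corner b) where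
  algebraMap :=
    { toFun := fun c => ⟨c • b, by rw [mul_smul_comm, hb.out.2],
        by rw [smul_mul_assoc, hb.out.2]⟩
      map_one' := Subtype.ext (one_smul k b)
      map_mul' := fun c d => Subtype.ext <| by
        show (c * d) • b = (c • b) * (d • b)
        rw [smul_mul_assoc, mul_smul_comm, hb.out.2, smul_smul]
      map_zero' := Subtype.ext (zero_smul k b)
      map_add' := fun c d => Subtype.ext (add_smul c d b) }
  smul c x := ⟨c • x.1, by rw [mul_smul_comm, x.2.1], by rw [smul_mul_assoc, x.2.2]⟩
  commutes' c x := Subtype.ext <| by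
    show (c • b) * x.1 = x.1 * (c • b)
    rw [smul_mul_assoc, mul_smul_comm, x.2.1, x.2.2]
  smul_def' c x := Subtype.ext <| by
    show c • x.1 = (c • b) * x.1
    rw [smul_mul_assoc, x.2.1]

/-- The first Frobenius twist `A^(ℓ)` of a `k`-algebra `A`: the same ring, with the
`k`-action pulled back along `λ ↦ λ^{1/ℓ}`, i.e. `λ · x = λ^{1/ℓ} x`. -/
def FrobTwist (ℓ : ℕ) (A : Type*) : Type _ := A

instance (ℓ : ℕ) (A : Type*) [Ring A] : Ring (FrobTwist ℓ A) := inferInstanceAs (Ring A)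

noncomputable instance (ℓ : ℕ) [Fact ℓ.Prime] (k : Type*) [Field k] [IsAlgClosed k]
    [CharP k ℓ] (A : Type*) [Ring A] [Algebra k A] : Algebra k (FrobTwist ℓ A) :=
  RingHom.toAlgebra' ((algebraMap k A).comp ((frobeniusEquiv k ℓ).symm : k →+* k))
    (fun c x => Algebra.commutes (A := A) ((frobeniusEquiv k ℓ).symm c) x)

/-!
In a symmetric group every element is conjugate to its powers of exponent prime to the group order,
so all its characters are rational-valued. If a class sum acts on a module as a scalar, comparing
traces shows that this scalar is rational, and it is integral over `ℤ`. Hence each class sum of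
`ℤSₙ` is a root of a monic integer polynomial that splits over `ℤ`. Modulo `ℓ` such a polynomial
divides a power of `X ^ ℓ - X`, so `z ^ ℓ - z` is nilpotent for every class sum `z` of `kSₙ`. By
semilinearity `z ^ ℓ - F z` is nilpotent for every central `z`, where `F` applies the Frobenius of
`k` to the coefficients, and therefore `F` fixes every central idempotent of `kSₙ`.

Let `b` be a block of `kAₙ`. The sum of its `Sₙ`-conjugates is a central idempotent of `kSₙ`, so it
is fixed by `F`, and the block `F b` must be one of these conjugates. Composing `F` with a
conjugation gives a Frobenius-semilinear ring automorphism of `kAₙ` that fixes `b`, and it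
identifies the block algebra `kAₙb` with its Frobenius twist.
-/

open Module MonoidAlgebra Polynomial

universe u

/-- A finite group is rational if every element is conjugate to each of its powers with exponent
prime to the group order; equivalently, all its complex characters are rational-valued. -/
def IsRationalGroup (G : Type*) [Group G] : Prop :=
  ∀ (g : G) (m : ℕ), m.Coprime (Nat.card G) → IsConj g (g ^ m)

theorem cycleType_pow_of_coprime {α : Type*} [Fintype α] [DecidableEq α] (σ : Equiv.Perm α) {m : ℕ}
    (hm : m.Coprime (orderOf σ)) : (σ ^ m).cycleType = σ.cycleType := by
  induction σ using Equiv.Perm.cycle_induction_on with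
  | base_one => rw [one_pow]
  | base_cycles σ hσ =>
    rw [(hσ.pow_iff.2 hm).cycleType, hσ.cycleType, Equiv.Perm.support_pow_coprime hm]
  | induction_disjoint σ τ hστ _ ihσ ihτ =>
    rw [hστ.orderOf] at hm
    rw [hστ.commute.mul_pow, (hστ.pow_disjoint_pow m m).cycleType_mul, hστ.cycleType_mul,
      ihσ (hm.coprime_dvd_right (Nat.dvd_lcm_left _ _)),
      ihτ (hm.coprime_dvd_right (Nat.dvd_lcm_right _ _))]

theorem isRationalGroup_perm (α : Type*) [Finite α] : IsRationalGroup (Equiv.Perm α) := by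
  classical
  cases nonempty_fintype α
  intro σ m hm
  rw [Equiv.Perm.isConj_iff_cycleType_eq,
    cycleType_pow_of_coprime σ (hm.coprime_dvd_right (orderOf_dvd_natCard σ))]

theorem exists_eigenbasis {K V : Type*} [Field K] [AddCommGroup V] [Module K V]
    [FiniteDimensional K V] {f : End K V} (hf : ⨆ μ, f.eigenspace μ = ⊤) :
    ∃ (n : ℕ) (b : Basis (Fin n) K V) (μ : Fin n → K), ∀ i, f (b i) = μ i • b i := by
  classical
  have hint := DirectSum.isInternal_submodule_of_iSupIndep_of_iSup_eq_top
    f.eigenspaces_iSupIndep hf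
  let b := hint.collectedBasis fun μ ↦ Basis.ofVectorSpace K (f.eigenspace μ)
  have := FiniteDimensional.fintypeBasisIndex b
  let e := Fintype.equivFin (Σ μ, Basis.ofVectorSpaceIndex K (f.eigenspace μ))
  refine ⟨_, b.reindex e, fun i ↦ (e.symm i).1, fun i ↦ ?_⟩
  rw [Basis.reindex_apply]
  exact End.mem_eigenspace_iff.1 (hint.collectedBasis_mem _ _)

theorem pow_apply_of_apply_eq_smul {K V : Type*} [CommSemiring K] [AddCommMonoid V] [Module K V]
    {f : End K V} {v : V} {μ : K} (h : f v = μ • v) (m : ℕ) : (f ^ m) v = μ ^ m • v := by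
  induction m with
  | zero => simp
  | succ m ih => rw [pow_succ', End.mul_apply, ih, map_smul, h, smul_smul, pow_succ]

theorem trace_pow_eq_sum_pow {K V ι : Type*} [CommRing K] [AddCommGroup V] [Module K V]
    [Fintype ι] (b : Basis ι K V) {f : End K V} {μ : ι → K} (h : ∀ i, f (b i) = μ i • b i) (m : ℕ) :
    LinearMap.trace K V (f ^ m) = ∑ i, μ i ^ m := by
  classical
  rw [LinearMap.trace_eq_matrix_trace K b, Matrix.trace]
  simp [LinearMap.toMatrix_apply, pow_apply_of_apply_eq_smul (h _)]

theorem iSup_eigenspace_eq_top_of_pow_eq_one {K V : Type*} [Field K] [IsAlgClosed K]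
    [AddCommGroup V] [Module K V] [FiniteDimensional K V] {f : End K V} {N : ℕ} (hN : (N : K) ≠ 0)
    (hf : f ^ N = 1) : ⨆ μ, f.eigenspace μ = ⊤ := by
  refine End.IsSemisimple.iSup_eigenspace_eq_top <|
    End.isSemisimple_of_squarefree_aeval_eq_zero (p := X ^ N - 1) ?_ (by simp [hf])
  simpa using (separable_X_pow_sub_C (1 : K) hN one_ne_zero).squarefree

theorem map_trace_eq_trace_pow {K V : Type*} [Field K] [IsAlgClosed K]
    [AddCommGroup V] [Module K V] [FiniteDimensional K V] {f : End K V} {N : ℕ} (hN : (N : K) ≠ 0)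
    (hf : f ^ N = 1) {σ : K →+* K} {m : ℕ} (hσ : ∀ z : K, z ^ N = 1 → σ z = z ^ m) :
    σ (LinearMap.trace K V f) = LinearMap.trace K V (f ^ m) := by
  obtain ⟨n, b, μ, hμ⟩ := exists_eigenbasis (iSup_eigenspace_eq_top_of_pow_eq_one hN hf)
  have hroot (i : Fin n) : μ i ^ N = 1 := by
    have h : (1 : K) • b i = μ i ^ N • b i := by
      rw [← pow_apply_of_apply_eq_smul (hμ i), hf, End.one_apply, one_smul]
    exact (smul_left_injective K (b.ne_zero i) h).symm
  rw [← pow_one f, trace_pow_eq_sum_pow b hμ, map_sum, ← pow_mul, trace_pow_eq_sum_pow b hμ]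
  simp [hσ _ (hroot _)]

theorem exists_coprime_forall_map_eq_pow {R K : Type*} [CommRing R] [CommRing K] [IsDomain K]
    [Algebra R K] {N : ℕ} [NeZero N] {ζ : K} (hζ : IsPrimitiveRoot ζ N) (σ : K ≃ₐ[R] K) :
    ∃ m : ℕ, m.Coprime N ∧ ∀ z : K, z ^ N = 1 → σ z = z ^ m := by
  refine ⟨(hζ.autToPow R σ : ZMod N).val, ZMod.val_coe_unit_coprime _, fun z hz ↦ ?_⟩
  obtain ⟨i, -, rfl⟩ := hζ.eq_pow_of_pow_eq_one hz
  rw [map_pow, ← hζ.autToPow_spec R σ, ← pow_mul, ← pow_mul, mul_comm]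

theorem IsRationalGroup.character_mem_fieldRange {G : Type*} [Group G] (hG : IsRationalGroup G)
    (F : Type*) {K V : Type*} [Field F] [Field K] [IsAlgClosed K] [Algebra F K] [IsGalois F K]
    (hcard : (Nat.card G : K) ≠ 0) [AddCommGroup V] [Module K V] [FiniteDimensional K V]
    (ρ : Representation K G V) (g : G) : ρ.character g ∈ (algebraMap F K).fieldRange := by
  have : NeZero (Nat.card G : K) := ⟨hcard⟩
  have : NeZero (Nat.card G) := .of_neZero_natCast K
  refine (InfiniteGalois.mem_range_algebraMap_iff_fixed _).2 fun σ ↦ ?_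
  obtain ⟨ζ, hζ⟩ := HasEnoughRootsOfUnity.exists_primitiveRoot K (Nat.card G)
  obtain ⟨m, hm, hσ⟩ := exists_coprime_forall_map_eq_pow hζ σ
  obtain ⟨c, hc⟩ := isConj_iff.1 (hG g m hm)
  have hρ : ρ g ^ Nat.card G = 1 := by rw [← map_pow, pow_card_eq_one', map_one]
  calc σ (ρ.character g) = LinearMap.trace K V (ρ g ^ m) :=
        map_trace_eq_trace_pow (σ := (σ : K →+* K)) hcard hρ hσ
    _ = ρ.character (g ^ m) := by rw [← map_pow ρ g m, Representation.character]
    _ = ρ.character g := by rw [← hc, ρ.char_conj]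

section ClassSum

/-- The class sum of a conjugacy class `c`: the sum in the group algebra of the elements of `c`.
Class sums span the center of the group algebra. -/
noncomputable def classSum (R : Type*) {G : Type*} [Semiring R] [Group G] [Finite G]
    (c : ConjClasses G) : MonoidAlgebra R G :=
  ∑ x ∈ c.carrier.toFinite.toFinset, single x 1

variable {R : Type*} {G : Type*} [Group G]

theorem coeff_classSum [Semiring R] [Finite G] (c : ConjClasses G) [DecidableEq (ConjClasses G)]
    (g : G) : (classSum R c).coeff g = if ConjClasses.mk g = c then 1 else 0 := by
  classical
  simp [classSum, MonoidAlgebra.coeff_sum, Finsupp.single_apply, ConjClasses.mem_carrier_iff_mk_eq]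

theorem mapRingHom_classSum {S : Type*} [Semiring R] [Semiring S] [Finite G] (f : R →+* S)
    (c : ConjClasses G) : mapRingHom G f (classSum R c) = classSum S c := by
  simp [classSum]

theorem mem_center_of_forall_single [CommSemiring R] {z : MonoidAlgebra R G}
    (h : ∀ g, single g 1 * z = z * single g 1) : z ∈ Subalgebra.center R (MonoidAlgebra R G) := by
  refine Subalgebra.mem_center_iff.2 fun x ↦ ?_
  induction x using MonoidAlgebra.induction_linear with
  | zero => rw [zero_mul, mul_zero]
  | add x y hx hy => rw [add_mul, mul_add, hx, hy]
  | single g r =>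
    have hsmul : single g r = r • single g (1 : R) := by rw [smul_single', mul_one]
    rw [hsmul, smul_mul_assoc, mul_smul_comm, h]

theorem mem_center_iff_coeff_eq_of_isConj [CommSemiring R] {z : MonoidAlgebra R G} :
    z ∈ Subalgebra.center R (MonoidAlgebra R G) ↔ ∀ g h, IsConj g h → z.coeff g = z.coeff h := by
  refine ⟨fun hz g h hgh ↦ ?_, fun hz ↦ mem_center_of_forall_single fun g ↦ ?_⟩
  · obtain ⟨c, rfl⟩ := isConj_iff.1 hgh
    have := congrArg (fun x ↦ x.coeff (c * g)) (Subalgebra.mem_center_iff.1 hz (single c 1))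
    simpa [coeff_mul_single_apply, coeff_single_mul_apply] using this
  · ext h
    simpa [coeff_mul_single_apply, coeff_single_mul_apply] using
      hz (g⁻¹ * h) (h * g⁻¹) (isConj_iff.2 ⟨g, by group⟩)

theorem mapRingHom_mem_center {S : Type*} [CommSemiring R] [CommSemiring S] (f : R →+* S)
    {z : MonoidAlgebra R G} (hz : z ∈ Subalgebra.center R (MonoidAlgebra R G)) :
    mapRingHom G f z ∈ Subalgebra.center S (MonoidAlgebra S G) := by
  rw [mem_center_iff_coeff_eq_of_isConj] at hz ⊢
  intro g h hgh
  rw [coeff_mapRingHom, coeff_mapRingHom, hz g h hgh]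

theorem classSum_mem_center [CommSemiring R] [Finite G] (c : ConjClasses G) :
    classSum R c ∈ Subalgebra.center R (MonoidAlgebra R G) := by
  classical
  refine mem_center_iff_coeff_eq_of_isConj.2 fun g h hgh ↦ ?_
  rw [coeff_classSum, coeff_classSum, ConjClasses.mk_eq_mk_iff_isConj.2 hgh]

theorem span_range_classSum (R G : Type*) [CommSemiring R] [Group G] [Finite G] :
    Submodule.span R (Set.range (classSum R : ConjClasses G → MonoidAlgebra R G)) =
      (Subalgebra.center R (MonoidAlgebra R G)).toSubmodule := by
  classical
  cases nonempty_fintype (ConjClasses G)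
  refine le_antisymm
    (Submodule.span_le.2 (Set.range_subset_iff.2 classSum_mem_center)) fun z hz ↦ ?_
  have hsum : z = ∑ c : ConjClasses G, z.coeff c.out • classSum R c := by
    ext g
    have hg : IsConj g (ConjClasses.mk g).out :=
      ConjClasses.mk_eq_mk_iff_isConj.1 (Quotient.out_eq (ConjClasses.mk g)).symm
    simpa [MonoidAlgebra.coeff_sum, coeff_classSum] using
      mem_center_iff_coeff_eq_of_isConj.1 hz _ _ hg
  rw [hsum]
  exact Submodule.sum_smul_mem _ _ fun c _ ↦ Submodule.subset_span ⟨c, rfl⟩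

theorem asAlgebraHom_classSum [CommSemiring R] [Finite G] {V : Type*} [AddCommMonoid V]
    [Module R V] (ρ : Representation R G V) (c : ConjClasses G) :
    ρ.asAlgebraHom (classSum R c) = ∑ x ∈ c.carrier.toFinite.toFinset, ρ x := by
  simp [classSum]

end ClassSum

section CentralCharacter

variable {G : Type*} [Group G] [Finite G]

theorem IsRationalGroup.mem_fieldRange_of_asAlgebraHom_classSum_eq_smul (hG : IsRationalGroup G)
    (F : Type*) {K V : Type*} [Field F] [Field K] [CharZero K] [IsAlgClosed K] [Algebra F K]
    [IsGalois F K] [AddCommGroup V] [Module K V] [FiniteDimensional K V] [Nontrivial V]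
    {ρ : Representation K G V} {c : ConjClasses G} {μ : K}
    (h : ρ.asAlgebraHom (classSum K c) = μ • 1) : μ ∈ (algebraMap F K).fieldRange := by
  have hdim : (finrank K V : K) ≠ 0 := Nat.cast_ne_zero.2 finrank_pos.ne'
  have htrace : ∑ x ∈ c.carrier.toFinite.toFinset, ρ.character x = μ * finrank K V := by
    simpa [asAlgebraHom_classSum, Representation.character] using congrArg (LinearMap.trace K V) h
  rw [eq_div_of_mul_eq hdim htrace.symm]
  exact div_mem
    (sum_mem fun x _ ↦ hG.character_mem_fieldRange F (Nat.cast_ne_zero.2 Nat.card_pos.ne') ρ x)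
    (natCast_mem _ _)

theorem span_sub_algebraMap_ne_top_of_isRoot_minpoly {K A : Type*} [Field K] [Ring A]
    [Algebra K A] {a : A} (ha : IsIntegral K a) {μ : K} (hμ : (minpoly K a).IsRoot μ) :
    Ideal.span {a - algebraMap K A μ} ≠ ⊤ := by
  rw [Ne, Ideal.eq_top_iff_one, Ideal.mem_span_singleton']
  rintro ⟨u, hu⟩
  obtain ⟨q, hq⟩ := dvd_iff_isRoot.2 hμ
  have hzero : (a - algebraMap K A μ) * aeval a q = 0 := by
    simpa [hq] using minpoly.aeval K a
  have hq0 : q ≠ 0 := by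
    rintro rfl
    exact minpoly.ne_zero ha (by simpa using hq)
  refine (minpoly.degree_le_of_ne_zero K a hq0 ?_).not_gt ?_
  · rw [← one_mul (aeval a q), ← hu, mul_assoc, hzero, mul_zero]
  · rw [hq, degree_mul, degree_X_sub_C, degree_eq_natDegree hq0]
    exact_mod_cast Nat.lt_add_of_pos_left Nat.one_pos

theorem IsRationalGroup.mem_fieldRange_of_isRoot_minpoly_classSum (hG : IsRationalGroup G)
    (F : Type*) {K : Type*} [Field F] [Field K] [CharZero K] [IsAlgClosed K] [Algebra F K]
    [IsGalois F K] {c : ConjClasses G} {μ : K} (hμ : (minpoly K (classSum K c)).IsRoot μ) :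
    μ ∈ (algebraMap F K).fieldRange := by
  -- As `classSum K c` is central, it acts on the quotient by the left ideal `I` as `μ`.
  let I : Submodule (MonoidAlgebra K G) (MonoidAlgebra K G) :=
    Ideal.span {classSum K c - algebraMap K _ μ}
  have : Nontrivial (MonoidAlgebra K G ⧸ I) := Submodule.Quotient.nontrivial_iff.2 <|
    span_sub_algebraMap_ne_top_of_isRoot_minpoly (Algebra.IsIntegral.isIntegral _) hμ
  refine hG.mem_fieldRange_of_asAlgebraHom_classSum_eq_smul F (c := c)
    (ρ := Representation.ofModule' (MonoidAlgebra K G ⧸ I)) ?_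
  have hlift : (Representation.ofModule' (MonoidAlgebra K G ⧸ I)).asAlgebraHom =
      Algebra.lsmul K K (MonoidAlgebra K G ⧸ I) := (MonoidAlgebra.lift K _ G).apply_symm_apply _
  rw [hlift]
  refine LinearMap.ext fun v ↦ ?_
  obtain ⟨x, rfl⟩ := I.mkQ_surjective v
  refine (Submodule.Quotient.eq I).2 (Ideal.mem_span_singleton'.2 ⟨x, ?_⟩)
  rw [mul_sub, Subalgebra.mem_center_iff.1 (classSum_mem_center c), ← Algebra.commutes,
    ← Algebra.smul_def]
  rfl

end CentralCharacter

section IntegralPolynomial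

variable {G : Type*} [Group G] [Finite G]

theorem isIntegral_of_isRoot_minpoly {R K A : Type*} [CommRing R] [Field K] [Ring A] [Algebra R K]
    [Algebra K A] [Algebra R A] [IsScalarTower R K A] {a : A} (ha : IsIntegral R a) {μ : K}
    (hμ : (minpoly K a).IsRoot μ) : IsIntegral R μ := by
  obtain ⟨p, hp, hpa⟩ := ha
  have hroot : (p.map (algebraMap R K)).IsRoot μ :=
    hμ.dvd (minpoly.dvd K a (by rwa [aeval_map_algebraMap, aeval_def]))
  exact ⟨p, hp, by rwa [IsRoot.def, Polynomial.eval_map] at hroot⟩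

theorem IsRationalGroup.mem_range_intCast_of_isRoot_minpoly_classSum (hG : IsRationalGroup G)
    {K : Type*} [Field K] [CharZero K] [IsAlgClosed K] [Algebra ℚ K] [IsGalois ℚ K]
    {c : ConjClasses G} {μ : K} (hμ : (minpoly K (classSum K c)).IsRoot μ) :
    μ ∈ (Int.castRingHom K).range := by
  have hint : IsIntegral ℤ (classSum K c) := by
    rw [← mapRingHom_classSum (Int.castRingHom K)]
    exact map_isIntegral_int _ (Algebra.IsIntegral.isIntegral (R := ℤ) (classSum ℤ c))
  obtain ⟨q, rfl⟩ := hG.mem_fieldRange_of_isRoot_minpoly_classSum ℚ hμ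
  have hq : IsIntegral ℤ q := (isIntegral_algebraMap_iff (algebraMap ℚ K).injective).1
    (isIntegral_of_isRoot_minpoly hint hμ)
  obtain ⟨m, rfl⟩ := IsIntegrallyClosed.isIntegral_iff.1 hq
  exact ⟨m, by simp⟩

theorem exists_monic_splits_map_int_eq {K : Type*} [Field K] [CharZero K] {p : K[X]}
    (hp : p.Splits) (hmonic : p.Monic) (hroots : ∀ μ ∈ p.roots, μ ∈ (Int.castRingHom K).range) :
    ∃ q : ℤ[X], q.Monic ∧ q.Splits ∧ q.map (Int.castRingHom K) = p := by
  obtain ⟨q, rfl, -, hq⟩ := lifts_and_natDegree_eq_and_monic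
    (hp.mem_lift_of_roots_mem_range hmonic _ hroots) hmonic
  exact ⟨q, hq, hp.of_splits_map_of_injective (RingHom.injective_int _) hroots, rfl⟩

theorem IsRationalGroup.exists_monic_splits_aeval_classSum_eq_zero (hG : IsRationalGroup G)
    (c : ConjClasses G) : ∃ p : ℤ[X], p.Monic ∧ p.Splits ∧ aeval (classSum ℤ c) p = 0 := by
  let K := AlgebraicClosure ℚ
  let _ : Algebra ℚ K := AlgebraicClosure.instAlgebra ℚ
  have : IsGalois ℚ K := IsGalois.mk
  have hmonic : (minpoly K (classSum K c)).Monic := minpoly.monic (Algebra.IsIntegral.isIntegral _)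
  obtain ⟨p, hp, hsplits, hpK⟩ := exists_monic_splits_map_int_eq (IsAlgClosed.splits _) hmonic
    fun μ hμ ↦ hG.mem_range_intCast_of_isRoot_minpoly_classSum (isRoot_of_mem_roots hμ)
  refine ⟨p, hp, hsplits,
    MonoidAlgebra.map_injective (Int.castRingHom K : ℤ →+ K) Int.cast_injective ?_⟩
  have hcomm : (algebraMap K (MonoidAlgebra K G)).comp (Int.castRingHom K) =
      (mapRingHom G (Int.castRingHom K)).comp (algebraMap ℤ (MonoidAlgebra ℤ G)) :=
    RingHom.ext_int _ _
  calc mapRingHom G (Int.castRingHom K) (aeval (classSum ℤ c) p)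
      = aeval (classSum K c) (p.map (Int.castRingHom K)) := by
        rw [map_aeval_eq_aeval_map hcomm, mapRingHom_classSum]
    _ = mapRingHom G (Int.castRingHom K) 0 := by rw [hpK, minpoly.aeval, map_zero]

end IntegralPolynomial

section Nilpotent

theorem dvd_X_pow_card_sub_X_pow_natDegree {F : Type*} [Field F] [Fintype F] {q : F[X]}
    (hq : q.Splits) (hq0 : q ≠ 0) : q ∣ (X ^ Fintype.card F - X) ^ q.natDegree := by
  classical
  have hX : (X ^ Fintype.card F - X : F[X]) ≠ 0 :=
    FiniteField.X_pow_card_sub_X_ne_zero F Fintype.one_lt_card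
  rw [hq.dvd_iff_roots_le_roots hq0 (pow_ne_zero _ hX), roots_pow,
    FiniteField.roots_X_pow_card_sub_X, hq.natDegree_eq_card_roots, Multiset.le_iff_count]
  intro a
  rw [Multiset.count_nsmul, Multiset.count_eq_one_of_mem Finset.univ.nodup (Finset.mem_univ a),
    mul_one]
  exact Multiset.count_le_card _ _

theorem isNilpotent_pow_char_sub_self_of_aeval_eq_zero {A : Type*} [Ring A] {ℓ : ℕ}
    [Fact ℓ.Prime] [CharP A ℓ] {a : A} {p : ℤ[X]} (hp : p.Monic) (hsplits : p.Splits)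
    (ha : aeval a p = 0) : IsNilpotent (a ^ ℓ - a) := by
  let _ : Algebra (ZMod ℓ) A := ZMod.algebra A ℓ
  let q : (ZMod ℓ)[X] := p.map (algebraMap ℤ (ZMod ℓ))
  have hqa : aeval a q = 0 := by rw [aeval_map_algebraMap, ha]
  have hdvd : q ∣ (X ^ ℓ - X) ^ q.natDegree := by
    simpa only [ZMod.card] using
      dvd_X_pow_card_sub_X_pow_natDegree (hsplits.map (algebraMap ℤ (ZMod ℓ))) (hp.map _).ne_zero
  refine ⟨q.natDegree, ?_⟩
  simpa [hqa] using map_dvd (aeval a) hdvd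

variable {G : Type*} [Group G] [Finite G] {k : Type*} [CommRing k] (ℓ : ℕ) [Fact ℓ.Prime]
  [CharP k ℓ]

theorem IsRationalGroup.isNilpotent_classSum_pow_char_sub_self (hG : IsRationalGroup G)
    (c : ConjClasses G) : IsNilpotent (classSum k c ^ ℓ - classSum k c) := by
  have : CharP (MonoidAlgebra k G) ℓ :=
    charP_of_injective_algebraMap (FaithfulSMul.algebraMap_injective k (MonoidAlgebra k G)) ℓ
  obtain ⟨p, hp, hsplits, hpc⟩ := hG.exists_monic_splits_aeval_classSum_eq_zero c
  refine isNilpotent_pow_char_sub_self_of_aeval_eq_zero hp hsplits ?_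
  have := aeval_algHom_apply (mapRingHom G (Int.castRingHom k)).toIntAlgHom (classSum ℤ c) p
  rwa [hpc, map_zero, RingHom.toIntAlgHom_apply, mapRingHom_classSum] at this

theorem mapRingHom_smul {M R S : Type*} [Monoid M] [Semiring R] [Semiring S] (f : R →+* S) (a : R)
    (x : MonoidAlgebra R M) : mapRingHom M f (a • x) = f a • mapRingHom M f x := by
  ext
  simp

theorem IsRationalGroup.isNilpotent_pow_char_sub_mapRingHom_frobenius (hG : IsRationalGroup G)
    {z : MonoidAlgebra k G} (hz : z ∈ Subalgebra.center k (MonoidAlgebra k G)) :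
    IsNilpotent (z ^ ℓ - mapRingHom G (frobenius k ℓ) z) := by
  have : CharP (MonoidAlgebra k G) ℓ :=
    charP_of_injective_algebraMap (FaithfulSMul.algebraMap_injective k (MonoidAlgebra k G)) ℓ
  rw [← Subalgebra.mem_toSubmodule, ← span_range_classSum] at hz
  induction hz using Submodule.span_induction with
  | mem _ hx =>
    obtain ⟨c, rfl⟩ := hx
    rw [mapRingHom_classSum]
    exact hG.isNilpotent_classSum_pow_char_sub_self ℓ c
  | zero => simp [(Fact.out : ℓ.Prime).ne_zero]
  | smul a x _ hx =>
    rw [mapRingHom_smul, frobenius_def, _root_.smul_pow, ← smul_sub]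
    exact hx.smul _
  | add x y hx hy ihx ihy =>
    rw [span_range_classSum, Subalgebra.mem_toSubmodule] at hx
    have hcomm (w) : Commute w x := Subalgebra.mem_center_iff.1 hx w
    rw [add_pow_char_of_commute _ (hcomm y).symm, map_add, add_sub_add_comm]
    exact Commute.isNilpotent_add (Subalgebra.mem_center_iff.1
      (sub_mem (pow_mem hx ℓ) (mapRingHom_mem_center _ hx)) _).symm ihx ihy

theorem IsRationalGroup.mapRingHom_frobenius_eq_self (hG : IsRationalGroup G)
    {e : MonoidAlgebra k G} (he : e ∈ Subalgebra.center k (MonoidAlgebra k G))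
    (hidem : IsIdempotentElem e) : mapRingHom G (frobenius k ℓ) e = e := by
  have hnil := hG.isNilpotent_pow_char_sub_mapRingHom_frobenius ℓ he
  rw [hidem.pow_eq (Nat.Prime.ne_zero Fact.out)] at hnil
  exact (eq_of_isNilpotent_sub_of_isIdempotentElem_of_commute hidem (hidem.map _) hnil
    (Subalgebra.mem_center_iff.1 he _).symm).symm

end Nilpotent

section Block

variable {R S : Type*} [Ring R] [Ring S]

theorem IsCentralIdem.map (f : R ≃+* S) {b : R} (hb : IsCentralIdem b) : IsCentralIdem (f b) := by
  refine ⟨f.surjective.forall.2 fun x ↦ ?_, by rw [← map_mul, hb.2]⟩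
  rw [← map_mul, hb.1, map_mul]

theorem IsBlock.map (f : R ≃+* S) {b : R} (hb : IsBlock b) : IsBlock (f b) := by
  refine ⟨hb.1.map f, (map_ne_zero_iff f f.injective).2 hb.2.1, fun c d hc hd hcd h ↦ ?_⟩
  have hsplit := hb.2.2 (f.symm c) (f.symm d) (hc.map f.symm) (hd.map f.symm)
    (by rw [← map_mul, hcd, map_zero]) (by rw [← map_add, ← h, f.symm_apply_apply])
  simpa using hsplit

theorem IsCentralIdem.mul {b c : R} (hb : IsCentralIdem b) (hc : IsCentralIdem c) :
    IsCentralIdem (b * c) :=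
  ⟨fun x ↦ (Commute.mul_left (hb.1 x) (hc.1 x)).eq,
    IsIdempotentElem.mul_of_commute (hb.1 c) hb.2 hc.2⟩

theorem IsCentralIdem.one_sub {b : R} (hb : IsCentralIdem b) : IsCentralIdem (1 - b) :=
  ⟨fun x ↦ ((Commute.one_left x).sub_left (hb.1 x)).eq, IsIdempotentElem.one_sub hb.2⟩

theorem IsBlock.mul_eq_zero_or_mul_eq_self {b c : R} (hb : IsBlock b) (hc : IsCentralIdem c) :
    b * c = 0 ∨ b * c = b := by
  have horth : b * c * (b * (1 - c)) = 0 := by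
    rw [hb.1.1 (1 - c), mul_assoc, ← mul_assoc c, mul_sub, mul_one, hc.2, sub_self, zero_mul,
      mul_zero]
  have hsum : b = b * c + b * (1 - c) := by rw [← mul_add, add_sub_cancel, mul_one]
  refine (hb.2.2 _ _ (hb.1.mul hc) (hb.1.mul hc.one_sub) horth hsum).imp_right fun h ↦ ?_
  rw [mul_sub, mul_one, sub_eq_zero] at h
  exact h.symm

theorem IsBlock.mul_eq_zero_of_ne {b c : R} (hb : IsBlock b) (hc : IsBlock c) (hbc : b ≠ c) :
    b * c = 0 := by
  rcases hb.mul_eq_zero_or_mul_eq_self hc.1 with hzero | hbself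
  · exact hzero
  rcases hc.mul_eq_zero_or_mul_eq_self hb.1 with hzero | hcself
  · rw [hb.1.1, hzero]
  · exact absurd (by rw [← hbself, hb.1.1, hcself]) hbc

theorem orthogonalIdempotents_of_isBlock {ι : Type*} {e : ι → R} (he : ∀ i, IsBlock (e i))
    (hinj : Function.Injective e) : OrthogonalIdempotents e :=
  ⟨fun i ↦ (he i).1.2, fun i j hij ↦ (he i).mul_eq_zero_of_ne (he j) (hinj.ne hij)⟩

theorem smul_sum_orbit {Γ M : Type*} [Group Γ] [AddCommMonoid M] [DistribMulAction Γ M] (x : M)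
    [Fintype (MulAction.orbit Γ x)] (γ : Γ) :
    γ • ∑ y : MulAction.orbit Γ x, (y : M) = ∑ y : MulAction.orbit Γ x, (y : M) := by
  rw [Finset.smul_sum]
  exact Equiv.sum_comp (MulAction.toPerm γ) fun y : MulAction.orbit Γ x ↦ (y : M)

variable {Γ : Type*} [Group Γ] [MulSemiringAction Γ R] {b : R}

theorem IsBlock.of_mem_orbit (hb : IsBlock b) {c : R} (hc : c ∈ MulAction.orbit Γ b) :
    IsBlock c := by
  obtain ⟨γ, rfl⟩ := hc
  exact hb.map (MulSemiringAction.toRingEquiv Γ R γ)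

theorem IsBlock.orthogonalIdempotents_orbit (hb : IsBlock b) :
    OrthogonalIdempotents (Subtype.val : MulAction.orbit Γ b → R) :=
  orthogonalIdempotents_of_isBlock (fun c ↦ hb.of_mem_orbit c.2) Subtype.val_injective

theorem IsBlock.apply_mem_orbit [Fintype (MulAction.orbit Γ b)] (hb : IsBlock b) {f : R ≃+* R}
    (hf : f (∑ c : MulAction.orbit Γ b, (c : R)) = ∑ c : MulAction.orbit Γ b, (c : R)) :
    f b ∈ MulAction.orbit Γ b := by
  by_contra hnot
  have hb_sum : b * ∑ c : MulAction.orbit Γ b, (c : R) = b :=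
    hb.orthogonalIdempotents_orbit.mul_sum_of_mem
      (Finset.mem_univ (⟨b, MulAction.mem_orbit_self b⟩ : MulAction.orbit Γ b))
  have hfb : f b * ∑ c : MulAction.orbit Γ b, (c : R) = 0 := by
    rw [Finset.mul_sum]
    refine Finset.sum_eq_zero fun c _ ↦ (hb.map f).mul_eq_zero_of_ne (hb.of_mem_orbit c.2) ?_
    intro h
    exact hnot (h ▸ c.2)
  rw [← hf, ← map_mul, hb_sum] at hfb
  exact (hb.map f).2.1 hfb

end Block

section NormalSubgroup

variable (k : Type*) {G : Type*} [CommRing k] [Group G] (N : Subgroup G) [N.Normal]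

/-- The action of `G` on the group algebra of a normal subgroup `N` by conjugation. -/
noncomputable def conjAut : G →* (MonoidAlgebra k N ≃ₐ[k] MonoidAlgebra k N) :=
  domCongrAut.comp MulAut.conjNormal

variable {k N}

theorem single_mul_mapDomainRingHom_subtype (g : G) (x : MonoidAlgebra k N) :
    single g 1 * mapDomainRingHom k N.subtype x =
      mapDomainRingHom k N.subtype (conjAut k N g x) * single g 1 := by
  induction x using MonoidAlgebra.induction_linear with
  | zero => simp
  | add x y hx hy => simp only [map_add, mul_add, add_mul, hx, hy]
  | single h r => simp [conjAut, single_mul_single]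

theorem mapDomainRingHom_subtype_mem_center {x : MonoidAlgebra k N}
    (hx : ∀ g, conjAut k N g x = x) :
    mapDomainRingHom k N.subtype x ∈ Subalgebra.center k (MonoidAlgebra k G) :=
  mem_center_of_forall_single fun g ↦ by rw [single_mul_mapDomainRingHom_subtype, hx]

variable [Finite G] (ℓ : ℕ) [Fact ℓ.Prime] [CharP k ℓ]

theorem IsRationalGroup.mapRingHom_frobenius_eq_self_of_conjAut_eq_self (hG : IsRationalGroup G)
    {e : MonoidAlgebra k N} (he : ∀ g, conjAut k N g e = e) (hidem : IsIdempotentElem e) :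
    mapRingHom N (frobenius k ℓ) e = e := by
  apply mapDomain_injective N.subtype_injective
  have hcomm := DFunLike.congr_fun
    (mapRingHom_comp_mapDomainRingHom (frobenius k ℓ) N.subtype) e
  exact hcomm.symm.trans <| hG.mapRingHom_frobenius_eq_self ℓ
    (mapDomainRingHom_subtype_mem_center he) (hidem.map _)

theorem IsRationalGroup.exists_conjAut_eq_mapRingEquiv_frobeniusEquiv [PerfectRing k ℓ]
    (hG : IsRationalGroup G) {b : MonoidAlgebra k N} (hb : IsBlock b) :
    ∃ g, conjAut k N g b = mapRingEquiv N (frobeniusEquiv k ℓ) b := by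
  have : Finite (conjAut k N).range := (Set.finite_range (conjAut k N)).to_subtype
  have : Finite (MulAction.orbit (conjAut k N).range b) := (Set.finite_range _).to_subtype
  have : Fintype (MulAction.orbit (conjAut k N).range b) := Fintype.ofFinite _
  have hsum : mapRingEquiv N (frobeniusEquiv k ℓ)
      (∑ c : MulAction.orbit (conjAut k N).range b, (c : MonoidAlgebra k N)) =
        ∑ c : MulAction.orbit (conjAut k N).range b, (c : MonoidAlgebra k N) :=
    hG.mapRingHom_frobenius_eq_self_of_conjAut_eq_self ℓ
      (fun g ↦ smul_sum_orbit b (⟨conjAut k N g, g, rfl⟩ : (conjAut k N).range))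
      hb.orthogonalIdempotents_orbit.isIdempotentElem_sum
  obtain ⟨⟨_, g, rfl⟩, hg⟩ := hb.apply_mem_orbit hsum
  exact ⟨g, hg⟩

end NormalSubgroup

section FrobeniusTwist

/-- The isomorphism of corners induced by a ring isomorphism. -/
def cornerRingEquiv {R S : Type*} [Ring R] [Ring S] (f : R ≃+* S) {b : R} {c : S} (h : f b = c) :
    Corner b ≃+* Corner c where
  toFun x := ⟨f x.1, by rw [← h, ← map_mul, x.2.1], by rw [← h, ← map_mul, x.2.2]⟩
  invFun y := ⟨f.symm y.1, by rw [← f.symm_apply_eq.2 h.symm, ← map_mul, y.2.1],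
    by rw [← f.symm_apply_eq.2 h.symm, ← map_mul, y.2.2]⟩
  left_inv x := Subtype.ext (f.symm_apply_apply x.1)
  right_inv y := Subtype.ext (f.apply_symm_apply y.1)
  map_mul' x y := Subtype.ext (map_mul f x.1 y.1)
  map_add' x y := Subtype.ext (map_add f x.1 y.1)

variable {ℓ : ℕ} [Fact ℓ.Prime] {k : Type*} [Field k] [IsAlgClosed k] [CharP k ℓ]

/-- A ring automorphism `θ` which is semilinear along the Frobenius of `k` identifies `A` with its
Frobenius twist, through `θ⁻¹`. -/
noncomputable def algEquivFrobTwist {A : Type*} [Ring A] [Algebra k A] (θ : A ≃+* A)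
    (hθ : ∀ (c : k) (x : A), θ (c • x) = c ^ ℓ • θ x) : A ≃ₐ[k] FrobTwist ℓ A :=
  (AlgEquiv.ofRingEquiv (f := (show FrobTwist ℓ A ≃+* A from θ)) fun c ↦ by
    change θ (algebraMap k A ((frobeniusEquiv k ℓ).symm c)) = algebraMap k A c
    rw [Algebra.algebraMap_eq_smul_one, hθ, frobeniusEquiv_symm_pow_p, map_one,
      Algebra.algebraMap_eq_smul_one]).symm

theorem exists_linear_equivalence_of_algEquiv {k A B : Type u} [Field k] [Ring A] [Ring B]
    [Algebra k A] [Algebra k B] (e : A ≃ₐ[k] B) :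
    ∃ (E : ModuleCat.{u} A ≌ ModuleCat.{u} B) (_ : E.functor.Additive), E.functor.Linear k :=
  ⟨(MoritaEquivalence.ofAlgEquiv e).eqv, inferInstance, (MoritaEquivalence.ofAlgEquiv e).linear⟩

theorem alternatingGroup_block_morita_frobenius_number_one_general
    {G : Type*} [Group G] [Finite G] (hG : IsRationalGroup G) (N : Subgroup G) [N.Normal]
    {b : MonoidAlgebra k N} (hb : IsBlock b) [Fact (IsCentralIdem b)] :
    Nonempty (Corner b ≃ₐ[k] FrobTwist ℓ (Corner b)) := by
  let F := MonoidAlgebra.mapRingEquiv N (frobeniusEquiv k ℓ)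
  obtain ⟨g, hg⟩ := hG.exists_conjAut_eq_mapRingEquiv_frobeniusEquiv ℓ hb
  let ψ := F.trans (conjAut k N g).symm.toRingEquiv
  have hψb : ψ b = b := (conjAut k N g).symm_apply_eq.2 hg.symm
  have hψ (c : k) (x : MonoidAlgebra k N) : ψ (c • x) = c ^ ℓ • ψ x := by
    change (conjAut k N g).symm (F (c • x)) = c ^ ℓ • (conjAut k N g).symm (F x)
    rw [← map_smul]
    exact congrArg _ (mapRingHom_smul (frobenius k ℓ) c x)
  exact ⟨algEquivFrobTwist (cornerRingEquiv ψ hψb) fun c x ↦ Subtype.ext (hψ c x.1)⟩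

end FrobeniusTwist

/-- Every block `b` of `kA_n`, with `k` an algebraic closure of `𝔽_ℓ`, has Morita
Frobenius number `1`: the block algebra `kA_n·b` is Morita equivalent, as a
`k`-algebra, to its first Frobenius twist; i.e. there is a `k`-linear equivalence
between the module categories of `kA_n·b` and of its first Frobenius twist. -/
theorem alternatingGroup_block_morita_frobenius_number_one
    (ℓ : ℕ) [Fact ℓ.Prime] (k : Type) [Field k] [IsAlgClosed k] [CharP k ℓ]
    [Algebra (ZMod ℓ) k] [IsAlgClosure (ZMod ℓ) k]
    (n : ℕ) (b : MonoidAlgebra k (alternatingGroup (Fin n)))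
    (hb : IsBlock b) [Fact (IsCentralIdem b)] :
    ∃ E : ModuleCat.{0} (Corner b) ≌ ModuleCat.{0} (FrobTwist ℓ (Corner b)),
      ∃ hadd : E.functor.Additive,
        @Functor.Linear k _ _ _ _ _ _ _ _ _ E.functor :=
  (alternatingGroup_block_morita_frobenius_number_one_general
    (isRationalGroup_perm (Fin n)) _ hb).elim exists_linear_equivalence_of_algEquiv
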